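/- For every X ∈ S₀, the sequence ψ_n(φ_n(X)) converges to X in operator norm, i.e., ‖X − ψ_n(φ_n(X))‖ → 0 as n → ∞. -/

import Mathlib

noncomputable section

open scoped ComplexOrder InnerProductSpace

/-- The Hilbert space ℓ²(ℕ) of square-summable complex sequences. -/
abbrev Hs : Type := lp (fun _ : ℕ => ℂ) 2

/-- The standard orthonormal basis vectors of ℓ²(ℕ) (indexed from 0). -/
def e (i : ℕ) : Hs := lp.single 2 i 1

/-- The matrix unit `E i j : x ↦ ⟨x, e j⟩ e i`. -/
def E (i j : ℕ) : Hs →L[ℂ] Hs := (innerSL ℂ (e j)).smulRight (e i)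

/-- `K₀`: the norm-closed linear span of the matrix units `E i j`, `(i,j) ≠ (0,0)`. -/
def K0 : Submodule ℂ (Hs →L[ℂ] Hs) :=
  (Submodule.span ℂ {T | ∃ i j : ℕ, (i, j) ≠ (0, 0) ∧ T = E i j}).topologicalClosure

/-- The operator system `S₀` spanned by `K₀` and the identity operator. -/
def S0 : Submodule ℂ (Hs →L[ℂ] Hs) := Submodule.span ℂ {(1 : Hs →L[ℂ] Hs)} ⊔ K0

lemma one_mem_S0 : (1 : Hs →L[ℂ] Hs) ∈ S0 :=
  Submodule.mem_sup_left (Submodule.mem_span_singleton_self _)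

/-- The matrix entry `X_{ij} = ⟨X e_j, e_i⟩` of a bounded operator on ℓ²(ℕ). -/
def entry (X : Hs →L[ℂ] Hs) (i j : ℕ) : ℂ := ⟪e i, X (e j)⟫_ℂ

/-- `φ_{n+1}(X) = V_{n+1}* X V_{n+1}`, the upper-left (n+1)×(n+1) corner of `X`. -/
def phi (n : ℕ) (X : Hs →L[ℂ] Hs) : Matrix (Fin (n+1)) (Fin (n+1)) ℂ :=
  fun i j => entry X i j

/-- `Q_{n+1}`: the projection onto the orthocomplement of the span of `e 0, …, e n`. -/
def Qop (n : ℕ) : Hs →L[ℂ] Hs := 1 - ∑ i : Fin (n+1), E i i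

/-- `ψ_{n+1}(Y) = V_{n+1} Y V_{n+1}* + y₀₀ Q_{n+1}`. -/
def psi (n : ℕ) (Y : Matrix (Fin (n+1)) (Fin (n+1)) ℂ) : Hs →L[ℂ] Hs :=
  (∑ i : Fin (n+1), ∑ j : Fin (n+1), Y i j • E i j) + Y 0 0 • Qop n

/-- Positivity in the C*-algebra of m×m matrices over a star ring: `M = N* N`. -/
def MatPos {A : Type*} [Ring A] [StarRing A] {m : ℕ}
    (M : Matrix (Fin m) (Fin m) A) : Prop :=
  ∃ N : Matrix (Fin m) (Fin m) A, M = N.conjTranspose * N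

/-- Complete positivity of a map between star rings: every matrix amplification
preserves positivity. -/
def IsCPfun {A B : Type*} [Ring A] [StarRing A] [Ring B] [StarRing B]
    (θ : A → B) : Prop :=
  ∀ (m : ℕ) (M : Matrix (Fin m) (Fin m) A), MatPos M → MatPos (M.map θ)

/-!
An operator in `S₀` has the form `λ + K` with `K ∈ K₀`, and the `(0, 0)` entry vanishes on `K₀`.
Writing `P` for the projection onto the span of `e 0, …, e n`, we have
`ψ (φ X) = P X P + X₀₀ (1 - P)`, hence `ψ (φ (λ + K)) = λ + P K P`: the `Q`-term of `ψ` restores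
exactly the part of `λ` that the compression by `P` destroys. It remains to see that `P K P → K`
in norm. This holds eventually with equality on matrix units, and it passes to the closed span
since the compressions `K ↦ P K P` are contractions.
-/

open Filter Topology Submodule InnerProductSpace

section UniformlyBounded

variable {ι 𝕜 F G : Type*} [NontriviallyNormedField 𝕜] [SeminormedAddCommGroup F]
  [NormedSpace 𝕜 F] [SeminormedAddCommGroup G] [NormedSpace 𝕜 G] {l : Filter ι}

theorem tendsto_apply_of_mem_topologicalClosure_span {T : ι → F →L[𝕜] G} {T₀ : F →L[𝕜] G} {C : ℝ}
    (hT : ∀ i, ‖T i‖ ≤ C) {S : Set F} (hS : ∀ x ∈ S, Tendsto (fun i => T i x) l (𝓝 (T₀ x)))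
    {x : F} (hx : x ∈ (span 𝕜 S).topologicalClosure) :
    Tendsto (fun i => T i x) l (𝓝 (T₀ x)) := by
  have equicontinuous_T : Equicontinuous fun i => (T i : F → G) :=
    (show _ ↔ ∃ C, ∀ i, ‖T i‖ ≤ C from (NormedSpace.equicontinuous_TFAE T).out 1 5).2 ⟨C, hT⟩
  have tendsto_on_span : ∀ y ∈ span 𝕜 S, Tendsto (fun i => T i y) l (𝓝 (T₀ y)) := by
    intro y hy
    induction hy using span_induction with
    | mem y hy => exact hS y hy
    | zero => simpa only [map_zero] using tendsto_const_nhds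
    | add y z _ _ hy hz => simpa only [map_add] using hy.add hz
    | smul c y _ hy => simpa only [map_smul] using hy.const_smul c
  exact closure_minimal tendsto_on_span (equicontinuous_T.isClosed_setOfPred_tendsto T₀.continuous)
    hx

theorem tendsto_mul_mul_of_mem_topologicalClosure_span {A : Type*} [SeminormedRing A]
    [NormedAlgebra 𝕜 A] {P : ι → A} {C : ℝ} (hP : ∀ i, ‖P i‖ ≤ C) {S : Set A}
    (hS : ∀ a ∈ S, Tendsto (fun i => P i * a * P i) l (𝓝 a)) {a : A}
    (ha : a ∈ (span 𝕜 S).topologicalClosure) : Tendsto (fun i => P i * a * P i) l (𝓝 a) := by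
  have norm_mulLeftRight_le (i : ι) : ‖ContinuousLinearMap.mulLeftRight 𝕜 A (P i) (P i)‖ ≤ C * C :=
    (ContinuousLinearMap.opNorm_mulLeftRight_apply_apply_le 𝕜 A _ _).trans
      (mul_self_le_mul_self (norm_nonneg _) (hP i))
  exact tendsto_apply_of_mem_topologicalClosure_span (T₀ := .id 𝕜 A) norm_mulLeftRight_le hS ha

end UniformlyBounded

section Compression

variable {ι 𝕜 H : Type*} [RCLike 𝕜] [NormedAddCommGroup H] [InnerProductSpace 𝕜 H]

theorem starProjection_mul_rankOne_mul_starProjection (U : Submodule 𝕜 H)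
    [U.HasOrthogonalProjection] {x y : H} (hx : x ∈ U) (hy : y ∈ U) :
    U.starProjection * rankOne 𝕜 x y * U.starProjection = rankOne 𝕜 x y := by
  ext z
  simp only [mul_apply_eq_comp, rankOne_apply, map_smul,
    ← U.inner_starProjection_left_eq_right, starProjection_eq_self_iff.2 hx,
    starProjection_eq_self_iff.2 hy]

theorem tendsto_starProjection_mul_mul_starProjection {κ : Type*} {l : Filter κ}
    {U : κ → Submodule 𝕜 H} [∀ k, (U k).HasOrthogonalProjection] {v : ι → H}
    (hv : ∀ i, ∀ᶠ k in l, v i ∈ U k) {T : H →L[𝕜] H}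
    (hT : T ∈ (span 𝕜 {R | ∃ i j, R = rankOne 𝕜 (v i) (v j)}).topologicalClosure) :
    Tendsto (fun k => (U k).starProjection * T * (U k).starProjection) l (𝓝 T) := by
  refine tendsto_mul_mul_of_mem_topologicalClosure_span
    (fun k => (U k).starProjection_norm_le) ?_ hT
  rintro _ ⟨i, j, rfl⟩
  refine tendsto_const_nhds.congr' ?_
  filter_upwards [hv i, hv j] with k hi hj
  exact (starProjection_mul_rankOne_mul_starProjection (U k) hi hj).symm

variable [Fintype ι]

theorem starProjection_span_range_eq_sum_rankOne {v : ι → H} (hv : Orthonormal 𝕜 v)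
    [(span 𝕜 (Set.range v)).HasOrthogonalProjection] :
    (span 𝕜 (Set.range v)).starProjection = ∑ i, rankOne 𝕜 (v i) (v i) := by
  ext x
  refine eq_starProjection_of_mem_of_inner_eq_zero (K := span 𝕜 (Set.range v)) ?_ fun w hw => ?_
  · simp only [sum_apply, rankOne_apply]
    exact sum_mem fun i _ => smul_mem _ _ (subset_span ⟨i, rfl⟩)
  · induction hw using span_induction with
    | mem w hw =>
      obtain ⟨i, rfl⟩ := hw
      rw [inner_sub_left, sum_apply]
      simp [hv.inner_left_fintype]
    | zero => exact inner_zero_right _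
    | add w z _ _ hw hz => rw [inner_add_right, hw, hz, add_zero]
    | smul c w _ hw => rw [inner_smul_right, hw, mul_zero]

theorem sum_rankOne_mul_mul_sum_rankOne (v : ι → H) (T : H →L[𝕜] H) :
    (∑ i, rankOne 𝕜 (v i) (v i)) * T * ∑ j, rankOne 𝕜 (v j) (v j) =
      ∑ i, ∑ j, inner 𝕜 (v i) (T (v j)) • rankOne 𝕜 (v i) (v j) := by
  rw [Finset.sum_mul, Finset.sum_mul_sum]
  refine Finset.sum_congr rfl fun i _ => Finset.sum_congr rfl fun j _ => ?_
  ext x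
  simp [smul_smul, mul_comm]

end Compression

theorem orthonormal_e : Orthonormal ℂ e := by
  rw [orthonormal_iff_ite]
  intro i j
  simp [e, lp.inner_single_left, Pi.single_apply]

theorem inner_e_e (i j : ℕ) : ⟪e i, e j⟫_ℂ = if i = j then 1 else 0 :=
  orthonormal_iff_ite.1 orthonormal_e i j

/-- The subspace `V_{n+1}(ℂⁿ⁺¹)` of `ℓ²(ℕ)` spanned by `e 0, …, e n`, so that `n` has the same
offset as in `phi n` and `psi n`. -/
abbrev initialSpan (n : ℕ) : Submodule ℂ Hs := span ℂ (Set.range fun i : Fin (n + 1) => e i)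

instance finiteDimensional_initialSpan (n : ℕ) : FiniteDimensional ℂ (initialSpan n) :=
  .span_of_finite ℂ (Set.finite_range _)

theorem e_mem_initialSpan {i n : ℕ} (h : i ≤ n) : e i ∈ initialSpan n :=
  subset_span ⟨⟨i, Nat.lt_succ_of_le h⟩, rfl⟩

theorem starProjection_initialSpan (n : ℕ) :
    (initialSpan n).starProjection = ∑ i : Fin (n + 1), E i i :=
  starProjection_span_range_eq_sum_rankOne (v := fun i : Fin (n + 1) => e i)
    (orthonormal_e.comp _ Fin.val_injective)

theorem psi_phi (n : ℕ) (X : Hs →L[ℂ] Hs) :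
    psi n (phi n X) = (initialSpan n).starProjection * X * (initialSpan n).starProjection +
      entry X 0 0 • (1 - (initialSpan n).starProjection) := by
  rw [starProjection_initialSpan]
  exact congrArg (· + _) (sum_rankOne_mul_mul_sum_rankOne (fun i : Fin (n + 1) => e i) X).symm

theorem entry_E (i j k l : ℕ) : entry (E i j) k l = if i = k ∧ j = l then 1 else 0 := by
  rw [entry, E, ← rankOne_def, inner_right_rankOne_apply, inner_e_e, inner_e_e]
  simp only [ite_and, mul_ite, mul_one, mul_zero, eq_comm]
  split_ifs <;> rfl

theorem entry_smul_one_add (c : ℂ) (X : Hs →L[ℂ] Hs) (i : ℕ) :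
    entry (c • 1 + X) i i = c + entry X i i := by
  simp only [entry, add_apply, smul_apply, one_apply_eq_self, inner_add_right,
    inner_smul_right, inner_e_e, if_true, mul_one]

theorem entry_eq_zero_of_mem_K0 {K : Hs →L[ℂ] Hs} (hK : K ∈ K0) : entry K 0 0 = 0 := by
  let entryCLM : (Hs →L[ℂ] Hs) →L[ℂ] ℂ := innerSL ℂ (e 0) ∘L ContinuousLinearMap.apply ℂ Hs (e 0)
  suffices K0 ≤ entryCLM.ker from this hK
  refine topologicalClosure_minimal _ (span_le.2 ?_) entryCLM.isClosed_ker
  rintro _ ⟨i, j, hij, rfl⟩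
  exact (entry_E i j 0 0).trans (if_neg (by simpa using hij))

theorem tendsto_starProjection_mul_mul_of_mem_K0 {K : Hs →L[ℂ] Hs} (hK : K ∈ K0) :
    Tendsto (fun n => (initialSpan n).starProjection * K * (initialSpan n).starProjection) atTop
      (𝓝 K) := by
  refine tendsto_starProjection_mul_mul_starProjection (v := e)
    (fun i => (eventually_ge_atTop i).mono fun n => e_mem_initialSpan) ?_
  refine topologicalClosure_mono (span_mono ?_) hK
  exact fun T ⟨i, j, _, hT⟩ => ⟨i, j, hT⟩

theorem psi_phi_smul_one_add (n : ℕ) (c : ℂ) {K : Hs →L[ℂ] Hs} (hK : entry K 0 0 = 0) :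
    psi n (phi n (c • 1 + K)) =
      c • 1 + (initialSpan n).starProjection * K * (initialSpan n).starProjection := by
  have entry_eq : entry (c • 1 + K) 0 0 = c := by rw [entry_smul_one_add, hK, add_zero]
  have idem := (isIdempotentElem_starProjection (initialSpan n)).eq
  rw [psi_phi, entry_eq, mul_add, add_mul, mul_smul_comm, smul_mul_assoc, mul_one, idem, smul_sub]
  abel

/-- for every `X ∈ S₀`, `‖X − ψ_n(φ_n(X))‖ → 0` as `n → ∞`. -/
theorem stmt_1 (X : Hs →L[ℂ] Hs) (hX : X ∈ S0) :
    Filter.Tendsto (fun n : ℕ => ‖X - psi n (phi n X)‖) Filter.atTop (nhds 0) := by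
  obtain ⟨Y, hY, K, hK, rfl⟩ := mem_sup.1 hX
  obtain ⟨c, rfl⟩ := mem_span_singleton.1 hY
  simp only [psi_phi_smul_one_add _ c (entry_eq_zero_of_mem_K0 hK), add_sub_add_left_eq_sub,
    norm_sub_rev K]
  exact tendsto_iff_norm_sub_tendsto_zero.1 (tendsto_starProjection_mul_mul_of_mem_K0 hK)
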